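/- Let θ_i, θ_j ∈ ℝ and let ν be the uniform probability measure on the interval [0, 2π). Then ν({φ ∈ [0, 2π) : cos(θ_i − φ) · cos(θ_j − φ) < 0}) = |θ_i − θ_j|_{S¹} / π. (This is the probability that a line through the origin with uniformly random normal direction separates the unit vectors (cos θ_i, sin θ_i) and (cos θ_j, sin θ_j).) -/

import Mathlib

/-!
By the product-to-sum formula,
`2 cos (θi - φ) cos (θj - φ) = cos (θi - θj) - cos (2φ - (θi + θj + π))`.
The cosine is a strictly decreasing function of the distance to `0` on the circle `ℝ / 2πℤ`, so the
line with normal angle `φ` separates the two points exactly when `2φ` lies in the open ball with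
centre `θi + θj + π` and radius `δ = |θi - θj|_{S¹}`. Doubling preserves the uniform measure of
the circle, and a ball of radius `δ ≤ π` has length `2δ`, hence probability `2δ / 2π = δ / π`.
-/

open Real MeasureTheory

/-- The circle distance `|x|_{S¹} = min_{k ∈ ℤ} |x - 2πk| ∈ [0, π]`. -/
noncomputable def circleDist (x : ℝ) : ℝ := ⨅ k : ℤ, |x - 2 * Real.pi * k|

section AddCircle

theorem norm_coe_addCircle_eq_iInf (T x : ℝ) : ‖(x : AddCircle T)‖ = ⨅ k : ℤ, |x - T * k| := by
  have multiples_surjective : Function.Surjective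
      fun k : ℤ ↦ (⟨k • T, AddSubgroup.zsmul_mem_zmultiples T k⟩ : AddSubgroup.zmultiples T) := by
    rintro ⟨_, k, rfl⟩
    exact ⟨k, rfl⟩
  calc ‖(x : AddCircle T)‖
      = ⨅ y : AddSubgroup.zmultiples T, dist x y :=
        (QuotientAddGroup.norm_mk x).trans Metric.infDist_eq_iInf
    _ = ⨅ k : ℤ, dist x (k • T) := (multiples_surjective.iInf_comp _).symm
    _ = ⨅ k : ℤ, |x - T * k| := by simp only [Real.dist_eq, zsmul_eq_mul, mul_comm T]

variable {T : ℝ} [Fact (0 < T)]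

theorem volume_addCircle_ball (x : AddCircle T) (ε : ℝ) :
    volume (Metric.ball x ε) = ENNReal.ofReal (min T (2 * ε)) := by
  rw [← measure_congr AddCircle.closedBall_ae_eq_ball, AddCircle.volume_closedBall]

theorem volume_setOf_mem_Ico_and_coe_mem (a : ℝ) {s : Set (AddCircle T)} (hs : MeasurableSet s) :
    volume {x : ℝ | x ∈ Set.Ico a (a + T) ∧ (x : AddCircle T) ∈ s} = volume s := by
  rw [AddCircle.add_projection_respects_measure T a hs, Set.inter_comm]
  exact measure_congr (Ico_ae_eq_Ioc.inter (Filter.EventuallyEq.refl _ _))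

theorem volume_setOf_mem_Ico_and_coe_int_mul_mem (a : ℝ) {n : ℤ} (hn : n ≠ 0)
    {s : Set (AddCircle T)} (hs : MeasurableSet s) :
    volume {x : ℝ | x ∈ Set.Ico a (a + T) ∧ ((n * x : ℝ) : AddCircle T) ∈ s} = volume s := by
  have zsmul_measurePreserving : MeasurePreserving fun y : AddCircle T ↦ n • y :=
    Measure.measurePreserving_zsmul volume hn
  rw [← zsmul_measurePreserving.measure_preimage hs.nullMeasurableSet,
    ← volume_setOf_mem_Ico_and_coe_mem a (zsmul_measurePreserving.measurable hs)]
  simp only [Set.mem_preimage, ← AddCircle.coe_zsmul, zsmul_eq_mul]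

theorem volume_setOf_mem_Ico_and_norm_coe_int_mul_sub_lt (a c : ℝ) {n : ℤ} (hn : n ≠ 0) {r : ℝ}
    (hr : 2 * r ≤ T) :
    volume {x : ℝ | x ∈ Set.Ico a (a + T) ∧ ‖((n * x - c : ℝ) : AddCircle T)‖ < r} =
      ENNReal.ofReal (2 * r) := by
  simp only [AddCircle.coe_sub, ← mem_ball_iff_norm]
  rw [volume_setOf_mem_Ico_and_coe_int_mul_mem a hn Metric.isOpen_ball.measurableSet,
    volume_addCircle_ball, min_eq_right hr]

end AddCircle

section CircleDist

theorem circleDist_eq_norm (x : ℝ) : circleDist x = ‖(x : AddCircle (2 * π))‖ :=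
  (norm_coe_addCircle_eq_iInf (2 * π) x).symm

theorem circleDist_nonneg (x : ℝ) : 0 ≤ circleDist x :=
  circleDist_eq_norm x ▸ norm_nonneg _

theorem circleDist_le_pi (x : ℝ) : circleDist x ≤ π := by
  rw [circleDist_eq_norm]
  simpa [abs_of_pos pi_pos] using AddCircle.norm_le_half_period (2 * π) (x := x) two_pi_pos.ne'

theorem cos_circleDist (x : ℝ) : cos (circleDist x) = cos x := by
  rw [circleDist_eq_norm, AddCircle.norm_eq, cos_abs, cos_sub_int_mul_two_pi]

theorem cos_lt_cos_iff_circleDist_lt {x y : ℝ} : cos x < cos y ↔ circleDist y < circleDist x := by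
  rw [← cos_circleDist x, ← cos_circleDist y]
  exact strictAntiOn_cos.lt_iff_gt ⟨circleDist_nonneg x, circleDist_le_pi x⟩
    ⟨circleDist_nonneg y, circleDist_le_pi y⟩

theorem cos_sub_mul_cos_sub_neg_iff (a b x : ℝ) :
    cos (a - x) * cos (b - x) < 0 ↔ circleDist (2 * x - (a + b + π)) < circleDist (a - b) := by
  have product_to_sum :
      2 * (cos (a - x) * cos (b - x)) = cos (a - b) - cos (2 * x - (a + b + π)) := by
    have antipode : cos (2 * x - (a + b + π)) = -cos (a - x + (b - x)) := by
      rw [← cos_neg, ← cos_add_pi]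
      ring_nf
    rw [antipode, ← sub_sub_sub_cancel_right a b x, cos_add, cos_sub (a - x)]
    ring
  rw [← cos_lt_cos_iff_circleDist_lt]
  constructor <;> intro h <;> linarith

end CircleDist

/-- Under the uniform probability measure on `[0, 2π)`, the probability
that a random line through the origin (with normal direction `(cos φ, sin φ)`) separates
the unit vectors with angles `θi` and `θj` equals `|θi - θj|_{S¹} / π`. -/
theorem random_line_separation_probability (θi θj : ℝ) :
    (MeasureTheory.volume {φ : ℝ | φ ∈ Set.Ico 0 (2 * Real.pi) ∧
        Real.cos (θi - φ) * Real.cos (θj - φ) < 0}).toReal / (2 * Real.pi)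
      = circleDist (θi - θj) / Real.pi := by
  have : Fact (0 < 2 * π) := ⟨two_pi_pos⟩
  have volume_separating : volume {φ : ℝ | φ ∈ Set.Ico 0 (2 * π) ∧
      cos (θi - φ) * cos (θj - φ) < 0} = ENNReal.ofReal (2 * circleDist (θi - θj)) := by
    have diameter_le : 2 * circleDist (θi - θj) ≤ 2 * π := by linarith [circleDist_le_pi (θi - θj)]
    simpa only [cos_sub_mul_cos_sub_neg_iff, circleDist_eq_norm, Int.cast_ofNat, zero_add] using
      volume_setOf_mem_Ico_and_norm_coe_int_mul_sub_lt 0 (θi + θj + π) two_ne_zero diameter_le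
  rw [volume_separating, ENNReal.toReal_ofReal (by linarith [circleDist_nonneg (θi - θj)]),
    mul_div_mul_left _ _ two_ne_zero]
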